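/- Let A be an n × n Dyck matrix, and let P be the partial order on {1,…,n} with i <_P j if and only if a_{i,j} = 0. Let q : {1,…,n} → ℝ satisfy q(1) < q(2) < … < q(n) and, for all i, j: i <_P j if and only if q(i) + 1 < q(j); assume moreover that the 2n real numbers q(1),…,q(n), q(1)+1,…,q(n)+1 are pairwise distinct. Label the number q(i) by n+i and the number q(i)+1 by n+1−i, and let (t_1, t_2, …, t_{2n}) be the sequence of labels obtained by listing these 2n numbers in strictly decreasing order of their values. Then t_1 = 1 and π_A^{-1}(t_k) = t_{k+1} for all 1 ≤ k ≤ 2n−1; that is, reading the endpoint labels from right to left on the real line yields the cycle π_A^{-1}. -/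

import Mathlib

def IsDyckMatrix {n : ℕ} (A : Matrix (Fin n) (Fin n) ℝ) : Prop :=
  (∀ i j : Fin n, A i j = 0 ∨ A i j = 1) ∧
  (∀ i j : Fin n, (j : ℕ) ≤ (i : ℕ) → A i j = 1) ∧
  (∀ i j i' j' : Fin n, A i j = 0 → (i' : ℕ) ≤ (i : ℕ) → (j : ℕ) ≤ (j' : ℕ) → A i' j' = 0)

noncomputable def psiMat {n : ℕ} (A : Matrix (Fin n) (Fin n) ℝ) :
    Matrix (Fin n) (Fin (2 * n)) ℝ :=
  Matrix.of fun i c =>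
    if hc : (c : ℕ) < n then (if (i : ℕ) = (c : ℕ) then 1 else 0)
    else (-1 : ℝ) ^ (n - 1 - (i : ℕ)) *
      A ⟨n - 1 - (i : ℕ), by have := i.isLt; omega⟩ ⟨(c : ℕ) - n, by have := c.isLt; omega⟩

/-- The `j`-th column (1-based, `1 ≤ j ≤ 2n`) of `B = ψ(A)`, as a vector. -/
noncomputable def colB {n : ℕ} (A : Matrix (Fin n) (Fin n) ℝ) (j : ℕ) : Fin n → ℝ :=
  fun r => if h : j - 1 < 2 * n then psiMat A r ⟨j - 1, h⟩ else 0

/-- The set of principal indices `J = {j ∈ {n+1,…,2n} : B_j ≠ B_{j-1}}` (1-based). -/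
def JSet {n : ℕ} (A : Matrix (Fin n) (Fin n) ℝ) : Set ℕ :=
  {j | n + 1 ≤ j ∧ j ≤ 2 * n ∧ colB A j ≠ colB A (j - 1)}

open Classical in
/-- The weight map `ω` (1-based). -/
noncomputable def omegaB {n : ℕ} (A : Matrix (Fin n) (Fin n) ℝ) (j : ℕ) : ℕ :=
  if j ≤ n then j
  else (Finset.univ.filter fun r : Fin n => colB A j r ≠ 0).card

open Classical in
/-- The map `π_A` on `{1,…,2n}` (1-based). -/
noncomputable def piA {n : ℕ} (A : Matrix (Fin n) (Fin n) ℝ) : ℕ → ℕ := fun i =>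
  if i = 1 then n + 1
  else if i ≤ n then
    (if h : ∃ j, j ∈ JSet A ∧ omegaB A j = i - 1 then h.choose else i - 1)
  else if i < 2 * n then (if i + 1 ∈ JSet A then omegaB A i else i + 1)
  else omegaB A (2 * n)

/-- The value of the interval endpoint carrying label `ℓ` (encoded 0-based: `ℓ : Fin (2n)`
represents the label `ℓ+1 ∈ {1,…,2n}`).  The left endpoint `q(i)` of the `i`-th interval is
labeled `n+i` and its right endpoint `q(i)+1` is labeled `n+1-i` (1-based `i`); so label
`ℓ+1 ≤ n` is the right endpoint `q(n+1-(ℓ+1)) + 1` and label `ℓ+1 > n` is the left endpoint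
`q(ℓ+1-n)`. -/
noncomputable def endpointVal {n : ℕ} (q : Fin n → ℝ) : Fin (2 * n) → ℝ := fun ℓ =>
  if h : (ℓ : ℕ) < n then q ⟨n - 1 - (ℓ : ℕ), by omega⟩ + 1
  else q ⟨(ℓ : ℕ) - n, by have := ℓ.isLt; omega⟩

lemma core_aux {n : ℕ} (A : Matrix (Fin n) (Fin n) ℝ) (w : ℕ → ℝ)
    (F1 : ∀ r r', r < r' → r' < n → w r' < w r)
    (F2 : ∀ l l', n ≤ l → l < l' → l' < 2 * n → w l < w l')
    (F3 : ∀ l r, n ≤ l → l < 2 * n → r < n → (r < omegaB A (l+1) ↔ w l < w r))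
    (F3' : ∀ l, n ≤ l → l < 2 * n → omegaB A (l+1) ≤ n)
    (F3'' : ∀ l r, n ≤ l → l < 2 * n → r < n → w l ≠ w r)
    (F4 : ∀ l, n < l → l < 2 * n → (l + 1 ∈ JSet A ↔ ∃ r, r < n ∧ w (l-1) < w r ∧ w r < w l))
    (F5 : ∀ r, r < n → w n < w r)
    (F6 : ∀ l, n ≤ l → l < 2 * n → w l < w 0)
    (s p : ℕ) (hs : s < 2 * n) (hp : p < 2 * n) (hsp : w s < w p)
    (hadj : ∀ x, x < 2 * n → w s < w x → w x < w p → False) :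
    piA A (s+1) = p + 1 := by
  have key : ∀ l r, n ≤ l → l < 2 * n → r < n → w l < w r →
      (∀ x, x < n → w l < w x → w x < w r → False) → omegaB A (l+1) = r + 1 := by
    intro l r h1 h2 h3 h4 h5
    have a := (F3 l r h1 h2 h3).2 h4
    have b := F3' l h1 h2
    by_contra hne
    have c : r + 1 < n := by omega
    have d := (F3 l (r+1) h1 h2 c).1 (by omega)
    exact h5 (r+1) c d (F1 r (r+1) (by omega) c)
  unfold piA
  by_cases h0 : s = 0
  · exfalso
    subst h0
    rcases lt_or_ge p n with h | h
    · rcases Nat.eq_zero_or_pos p with h' | h'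
      · subst h'; exact lt_irrefl _ hsp
      · exact lt_asymm hsp (F1 0 p h' h)
    · exact lt_asymm hsp (F6 p h hp)
  rw [if_neg (by omega)]
  by_cases h1 : s < n
  · rw [if_pos (by omega)]
    have hss : w s < w (s-1) := F1 (s-1) s (by omega) h1
    -- J-elements with weight s
    have hJ : ∀ j, j ∈ JSet A → omegaB A j = s + 1 - 1 → ∃ l, j = l + 1 ∧ n < l ∧ l < 2 * n ∧
        w s < w l ∧ w l < w (s-1) ∧ w (l-1) < w s := by
      intro j hj ho
      obtain ⟨hj1, hj2, -⟩ := id hj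
      obtain ⟨l, rfl⟩ : ∃ l, j = l + 1 := ⟨j - 1, by omega⟩
      have a := (F3 l (s-1) (by omega) (by omega) (by omega)).1 (by omega)
      have b := mt (F3 l s (by omega) (by omega) (by omega)).2 (by omega)
      have c := F3'' l s (by omega) (by omega) (by omega)
      have b' : w s < w l := lt_of_le_of_ne (not_lt.1 b) c.symm
      have hl : n < l := by
        rcases Nat.lt_or_ge n l with h | h
        · exact h
        · have : l = n := by omega
          subst this
          exact absurd (F5 s h1) b
      refine ⟨l, rfl, hl, by omega, b', a, ?_⟩
      obtain ⟨r, hr, hr1, hr2⟩ := (F4 l hl (by omega)).1 hj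
      have : s ≤ r := by
        by_contra hlt
        rcases Nat.lt_or_ge r (s-1) with h | h
        · have := F1 r (s-1) h (by omega)
          linarith
        · have : r = s - 1 := by omega
          subst this; linarith
      rcases Nat.eq_or_lt_of_le this with h | h
      · subst h; exact hr1
      · exact hr1.trans (F1 s r h hr)
    rcases lt_or_ge p n with hpn | hpn
    · have hps : p = s - 1 := by
        by_contra hne
        rcases Nat.lt_trichotomy p s with h | h | h
        · exact hadj (s-1) (by omega) hss (F1 p (s-1) (by omega) (by omega))
        · subst h; exact lt_irrefl _ hsp
        · exact lt_asymm hsp (F1 s p h hpn)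
      rw [dif_neg]
      · omega
      · rintro ⟨j, hj, ho⟩
        obtain ⟨l, -, hl1, hl2, hl3, hl4, -⟩ := hJ j hj ho
        subst hps
        exact hadj l hl2 hl3 hl4
    · have hpp : w p < w (s-1) := by
        rcases lt_trichotomy (w p) (w (s-1)) with h | h | h
        · exact h
        · exact absurd h (F3'' p (s-1) hpn hp (by omega))
        · exact (hadj (s-1) (by omega) hss h).elim
      have hnp : n < p := by
        rcases Nat.lt_or_ge n p with h | h
        · exact h
        · have : p = n := by omega
          subst this
          exact absurd (F5 s h1) (not_lt.2 hsp.le)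
      have hom : omegaB A (p+1) = s := by
        have a := (F3 p (s-1) hpn hp (by omega)).2 hpp
        have b := mt (F3 p s hpn hp h1).1 (not_lt.2 hsp.le)
        omega
      have hpJ : p + 1 ∈ JSet A := by
        refine (F4 p hnp hp).2 ⟨s, h1, ?_, hsp⟩
        rcases lt_trichotomy (w (p-1)) (w s) with h | h | h
        · exact h
        · exact absurd h (F3'' (p-1) s (by omega) (by omega) (by omega))
        · exact (hadj (p-1) (by omega) h (F2 (p-1) p (by omega) (by omega) hp)).elim
      have hex : ∃ j, j ∈ JSet A ∧ omegaB A j = s + 1 - 1 := ⟨p+1, hpJ, by omega⟩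
      rw [dif_pos hex]
      obtain ⟨hj, ho⟩ := hex.choose_spec
      obtain ⟨l, hl0, hl1, hl2, hl3, hl4, hl5⟩ := hJ _ hj ho
      rw [hl0]
      rcases Nat.lt_trichotomy l p with h | h | h
      · exact (hadj l hl2 hl3 (F2 l p (by omega) h hp)).elim
      · rw [h]
      · exfalso
        rcases Nat.eq_or_lt_of_le (show p ≤ l - 1 by omega) with h' | h'
        · rw [← h'] at hl5; linarith
        · have := F2 p (l-1) hpn h' (by omega)
          linarith
  · rw [if_neg (by omega)]
    have hsn : n ≤ s := by omega
    have hright : p < n → omegaB A (s+1) = p + 1 := fun hpn =>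
      key s p hsn hs hpn hsp (fun x hx => hadj x (by omega))
    have hleft : n ≤ p → p = s + 1 := by
      intro hpn
      by_contra hne
      rcases Nat.lt_trichotomy p s with h | h | h
      · exact lt_asymm hsp (F2 p s hpn h hs)
      · subst h; exact lt_irrefl _ hsp
      · exact hadj (s+1) (by omega) (F2 s (s+1) hsn (by omega) (by omega))
          (F2 (s+1) p (by omega) (by omega) hp)
    by_cases h2 : s + 1 < 2 * n
    · rw [if_pos h2]
      have hF := F4 (s+1) (by omega) h2
      simp only [Nat.add_sub_cancel] at hF
      rcases lt_or_ge p n with hpn | hpn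
      · rw [if_pos, hright hpn]
        refine hF.2 ⟨p, hpn, hsp, ?_⟩
        rcases lt_trichotomy (w p) (w (s+1)) with h | h | h
        · exact h
        · exact absurd h.symm (F3'' (s+1) p (by omega) h2 hpn)
        · exact (hadj (s+1) h2 (F2 s (s+1) hsn (by omega) h2) h).elim
      · have := hleft hpn
        subst this
        rw [if_neg]
        intro h
        obtain ⟨r, hr, ha, hb⟩ := hF.1 h
        exact hadj r (by omega) ha hb
    · rw [if_neg h2]
      rcases lt_or_ge p n with hpn | hpn
      · rw [← hright hpn]; congr 1; omega
      · have := hleft hpn; omega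

lemma colB_right {n : ℕ} (A : Matrix (Fin n) (Fin n) ℝ) (l : ℕ) (h1 : n ≤ l) (h2 : l < 2 * n)
    (r : Fin n) : colB A (l+1) r = (-1 : ℝ) ^ (n - 1 - (r : ℕ)) *
      A ⟨n - 1 - (r : ℕ), by have := r.isLt; omega⟩ ⟨l - n, by omega⟩ := by
  simp [colB, psiMat, h2, not_lt.2 h1]

lemma lower_card {n : ℕ} (S : Finset (Fin n)) (hS : ∀ a b, a ≤ b → b ∈ S → a ∈ S) (r : Fin n) :
    (r : ℕ) < S.card ↔ r ∈ S := by
  constructor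
  · intro h
    by_contra hr
    have : S ⊆ Finset.Iio r := by
      intro x hx
      rw [Finset.mem_Iio]
      by_contra hh
      exact hr (hS r x (not_lt.1 hh) hx)
    have := Finset.card_le_card this
    rw [Fin.card_Iio] at this
    omega
  · intro h
    have : Finset.Iic r ⊆ S := fun x hx => hS x r (Finset.mem_Iic.1 hx) h
    have := Finset.card_le_card this
    rw [Fin.card_Iic] at this
    omega

/-- Reading the endpoint labels of a canonical interval representation from right to left on
the real line yields the cycle `π_A⁻¹`: if `t` enumerates the labels in strictly decreasing
order of endpoint values, then `t₁` is the label `1` and `π_A⁻¹(t_k) = t_{k+1}` (equivalently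
`π_A(t_{k+1}) = t_k`) for all `k`. -/
theorem interval_representation_reads_inverse_piA
    {n : ℕ} (hn : 0 < n) (A : Matrix (Fin n) (Fin n) ℝ) (hA : IsDyckMatrix A)
    (q : Fin n → ℝ) (hq : StrictMono q)
    (hrep : ∀ i j : Fin n, A i j = 0 ↔ q i + 1 < q j)
    (hdist : Function.Injective (endpointVal q))
    (t : Fin (2 * n) → Fin (2 * n)) (ht : Function.Bijective t)
    (hdec : ∀ k l : Fin (2 * n), k < l → endpointVal q (t l) < endpointVal q (t k)) :
    (t ⟨0, by omega⟩ : ℕ) = 0 ∧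
    ∀ k : ℕ, ∀ hk : k + 1 < 2 * n,
      piA A ((t ⟨k + 1, hk⟩ : ℕ) + 1) = (t ⟨k, by omega⟩ : ℕ) + 1 := by
  set w : ℕ → ℝ := fun l => if h : l < 2 * n then endpointVal q ⟨l, h⟩ else 0 with hw
  have hwt : ∀ x : Fin (2*n), w x = endpointVal q x := by
    intro x; simp [hw]
  have wR : ∀ r (h : r < n), w r = q ⟨n - 1 - r, by omega⟩ + 1 := by
    intro r h
    have : r < 2 * n := by omega
    simp [hw, this, endpointVal, h]
  have wL : ∀ l (h1 : n ≤ l) (h2 : l < 2 * n), w l = q ⟨l - n, by omega⟩ := by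
    intro l h1 h2
    simp [hw, h2, endpointVal, not_lt.2 h1]
  have F1 : ∀ r r', r < r' → r' < n → w r' < w r := by
    intro r r' h h'
    rw [wR r (by omega), wR r' h']
    have : q ⟨n - 1 - r', by omega⟩ < q ⟨n - 1 - r, by omega⟩ := hq (by
      simp only [Fin.lt_def]; omega)
    linarith
  have F2 : ∀ l l', n ≤ l → l < l' → l' < 2 * n → w l < w l' := by
    intro l l' h1 h2 h3
    rw [wL l h1 (by omega), wL l' (by omega) h3]
    exact hq (by simp only [Fin.lt_def]; omega)
  have Fne : ∀ l r, l < 2 * n → r < 2 * n → l ≠ r → w l ≠ w r := by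
    intro l r hl hr hne h
    have h' : endpointVal q ⟨l, hl⟩ = endpointVal q ⟨r, hr⟩ := by
      simpa [hw, hl, hr] using h
    have := hdist h'
    simp at this
    exact hne this
  clear_value w
  have F3'' : ∀ l r, n ≤ l → l < 2 * n → r < n → w l ≠ w r := by
    intro l r h1 h2 h3
    exact Fne l r h2 (by omega) (by omega)
  have hAw : ∀ l r (h1 : n ≤ l) (h2 : l < 2 * n) (h3 : r < n),
      A ⟨n - 1 - r, by omega⟩ ⟨l - n, by omega⟩ ≠ 0 ↔ w l < w r := by
    intro l r h1 h2 h3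
    have hne := F3'' l r h1 h2 h3
    rw [Ne, hrep, ← wR r h3, ← wL l h1 h2, not_lt]
    exact ⟨fun h => lt_of_le_of_ne h hne, le_of_lt⟩
  have hcol : ∀ l (r : Fin n), n ≤ l → l < 2 * n → (colB A (l+1) r ≠ 0 ↔ w l < w r) := by
    intro l r h1 h2
    rw [colB_right A l h1 h2, ← hAw l r h1 h2 r.2]
    simp
  have F3 : ∀ l r, n ≤ l → l < 2 * n → r < n → (r < omegaB A (l+1) ↔ w l < w r) := by
    intro l r h1 h2 h3
    unfold omegaB
    rw [if_neg (by omega)]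
    have := lower_card (Finset.univ.filter fun r : Fin n => colB A (l+1) r ≠ 0) (by
      intro a b hab hb
      simp only [Finset.mem_filter, Finset.mem_univ, true_and, hcol l _ h1 h2] at hb ⊢
      rcases eq_or_lt_of_le hab with h | h
      · rw [h]; exact hb
      · exact hb.trans (F1 a b h b.2)) ⟨r, h3⟩
    simp only [Finset.mem_filter, Finset.mem_univ, true_and, hcol l _ h1 h2] at this
    convert this
    rw [hcol l _ h1 h2]
  have F3' : ∀ l, n ≤ l → l < 2 * n → omegaB A (l+1) ≤ n := by
    intro l h1 h2
    unfold omegaB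
    rw [if_neg (by omega)]
    exact (Finset.card_le_univ _).trans (by simp)
  have F4 : ∀ l, n < l → l < 2 * n →
      (l + 1 ∈ JSet A ↔ ∃ r, r < n ∧ w (l-1) < w r ∧ w r < w l) := by
    intro l h1 h2
    obtain ⟨m, rfl⟩ : ∃ m, l = m + 1 := ⟨l - 1, by omega⟩
    simp only [JSet, Set.mem_ofPred_eq, Nat.add_sub_cancel]
    constructor
    · rintro ⟨-, -, hne⟩
      by_contra hcon
      push Not at hcon
      apply hne
      funext r
      have a := hAw m r (by omega) (by omega) r.2
      have b := hAw (m+1) r (by omega) (by omega) r.2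
      have hmm := F2 m (m+1) (by omega) (by omega) h2
      have hiff : w m < w r ↔ w (m+1) < w r :=
        ⟨fun h => lt_of_le_of_ne (hcon r r.2 h) (F3'' (m+1) r (by omega) h2 r.2),
          fun h => hmm.trans h⟩
      rw [colB_right A (m+1) (by omega) h2, colB_right A m (by omega) (by omega)]
      congr 1
      rw [hiff, ← b] at a
      rcases hA.1 ⟨n - 1 - r, by omega⟩ ⟨m - n, by omega⟩ with h | h <;>
      rcases hA.1 ⟨n - 1 - r, by omega⟩ ⟨m + 1 - n, by omega⟩ with h' | h' <;>
      rw [h, h'] at a ⊢ <;> simp at a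
    · rintro ⟨r, hr, ha, hb⟩
      refine ⟨by omega, by omega, fun h => ?_⟩
      have a := (hcol m ⟨r, hr⟩ (by omega) (by omega)).2 ha
      rw [← h] at a
      exact lt_asymm hb ((hcol (m+1) ⟨r, hr⟩ (by omega) h2).1 a)
  have F5 : ∀ r, r < n → w n < w r := by
    intro r hr
    rw [wR r hr, wL n le_rfl (by omega)]
    have : q ⟨n - n, by omega⟩ ≤ q ⟨n - 1 - r, by omega⟩ := hq.monotone (by
      simp only [Fin.le_def]; omega)
    linarith
  have F6 : ∀ l, n ≤ l → l < 2 * n → w l < w 0 := by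
    intro l h1 h2
    rw [wR 0 hn, wL l h1 h2]
    have : q ⟨l - n, by omega⟩ ≤ q ⟨n - 1 - 0, by omega⟩ := hq.monotone (by
      simp only [Fin.le_def]; omega)
    linarith
  have hd : ∀ k l : Fin (2*n), k < l → w (t l) < w (t k) := by
    intro k l h
    rw [hwt, hwt]; exact hdec k l h
  constructor
  · by_contra hne
    obtain ⟨m, hm⟩ := ht.2 ⟨0, by omega⟩
    have hm0 : (⟨0, by omega⟩ : Fin (2*n)) < m := by
      rw [Fin.lt_def]
      rcases Nat.eq_zero_or_pos (m : ℕ) with h | h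
      · exfalso
        apply hne
        have : m = ⟨0, by omega⟩ := Fin.ext h
        rw [← this, hm]
      · exact h
    have h := hd _ _ hm0
    rw [hm] at h
    simp only at h
    rcases lt_or_ge (t ⟨0, by omega⟩ : ℕ) n with h' | h'
    · exact lt_asymm h (F1 0 _ (by omega) h')
    · exact lt_asymm h (F6 _ h' (t _).2)
  · intro k hk
    refine core_aux A w F1 F2 F3 F3' F3'' F4 F5 F6 _ _ (t _).2 (t _).2
      (hd ⟨k, by omega⟩ ⟨k+1, hk⟩ (Nat.lt_succ_self k)) ?_
    intro x hx h1 h2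
    obtain ⟨m, hm⟩ := ht.2 ⟨x, hx⟩
    have hxm : x = (t m : ℕ) := by rw [hm]
    rw [hxm] at h1 h2
    rcases Nat.lt_or_ge (m : ℕ) (k+1) with h | h
    · rcases Nat.eq_or_lt_of_le (Nat.lt_succ_iff.1 h) with h' | h'
      · have : m = ⟨k, by omega⟩ := Fin.ext h'
        rw [this] at h2; exact lt_irrefl _ h2
      · exact lt_asymm h2 (hd m ⟨k, by omega⟩ h')
    · rcases Nat.eq_or_lt_of_le h with h' | h'
      · have : m = ⟨k+1, hk⟩ := Fin.ext h'.symm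
        rw [this] at h1; exact lt_irrefl _ h1
      · exact lt_asymm h1 (hd ⟨k+1, hk⟩ m h')
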